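/- arXiv:1309.0228 — 4 statements merged into one kernel-verified Lean document; each statement's English description precedes it below -/
import Mathlib

section
/- Let S be a non-empty set and let α be an equivalence relation on S. Then α is an upper-modular element of the lattice Eq(S) of all equivalence relations on S if and only if α has at most one non-singleton equivalence class, i.e., at most one equivalence class of α contains more than one element. -/
/-- An element `x` of a lattice `L` is upper-modular if for all `y, z ∈ L` with `y ≤ x`
one has `x ⊓ (y ⊔ z) = y ⊔ (x ⊓ z)`. -/
def IsUpperModularElement {L : Type*} [Lattice L] (x : L) : Prop :=
  ∀ y z : L, y ≤ x → x ⊓ (y ⊔ z) = y ⊔ (x ⊓ z)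

/-- An equivalence relation `α` on `S` has at most one non-singleton class:
any two elements lying in non-singleton classes of `α` are `α`-equivalent. -/
def HasAtMostOneNonSingletonClass {S : Type*} (α : Setoid S) : Prop :=
  ∀ x y : S, (∃ x', x' ≠ x ∧ α x x') → (∃ y', y' ≠ y ∧ α y y') → α x y

/-!
The criterion behind both directions is that `a` is upper-modular iff `a ⊓ (b ⊔ c) ≤ b` whenever
`a ⊓ c ≤ b ≤ a`.

If two different classes of `α` contain `x ≠ x'` and `y ≠ y'` respectively, let `β` identify `x`
with `x'`, and let `γ` identify `x` with `y` and `x'` with `y'`. Then `α ⊓ γ = ⊥`, while the path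
`y γ x β x' γ y'` puts the pair `(y, y')` into `α ⊓ (β ⊔ γ)`, although it is not in `β`.

If `α` has at most one non-singleton class and `α ⊓ γ ≤ β ≤ α`, then a path of `β`- and `γ`-steps
starting in that class is back in it at each nontrivial `β`-step, so the `γ`-steps between two
visits connect `α`-equivalent points and compose to a pair in `α ⊓ γ ≤ β`.
-/

theorem isUpperModularElement_iff_inf_sup_le {L : Type*} [Lattice L] {a : L} :
    IsUpperModularElement a ↔ ∀ b c : L, b ≤ a → a ⊓ c ≤ b → a ⊓ (b ⊔ c) ≤ b := by
  constructor
  · intro ha b c hba hcb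
    rw [ha b c hba, sup_eq_left.2 hcb]
  · intro h b c hba
    apply le_antisymm
    · calc a ⊓ (b ⊔ c) ≤ a ⊓ ((b ⊔ a ⊓ c) ⊔ c) := by gcongr; exact le_sup_left
        _ ≤ b ⊔ a ⊓ c := h _ _ (sup_le hba inf_le_left) le_sup_right
    · exact sup_le (le_inf hba le_sup_left) (inf_le_inf_left a le_sup_right)

section EquivalenceRelations

variable {S : Type*} {α β γ : Setoid S} {x x' y y' : S}

theorem setoid_sup_rel_induction {P : S → Prop} (hβ : ∀ u v, β u v → P u → P v)
    (hγ : ∀ u v, γ u v → P u → P v) (hxy : (β ⊔ γ) x y) (hx : P x) : P y := by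
  have sup_le_ker : β ⊔ γ ≤ Setoid.ker P :=
    sup_le (fun u v huv => propext ⟨hβ u v huv, hβ v u (β.symm' huv)⟩)
      (fun u v huv => propext ⟨hγ u v huv, hγ v u (γ.symm' huv)⟩)
  exact (sup_le_ker hxy : P x = P y) ▸ hx

/-- The equivalence relation whose only possibly non-singleton class is `{x, y}`; for `x ≠ y` these
are the atoms of the lattice of equivalence relations. -/
def pairSetoid (x y : S) : Setoid S where
  r u v := u = v ∨ (u = x ∨ u = y) ∧ (v = x ∨ v = y)
  iseqv := ⟨by grind, by grind, by grind⟩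

theorem pairSetoid_rel {u v : S} :
    pairSetoid x y u v ↔ u = v ∨ (u = x ∨ u = y) ∧ (v = x ∨ v = y) :=
  Iff.rfl

theorem pairSetoid_le_iff : pairSetoid x y ≤ α ↔ α x y := by
  refine ⟨fun h => h (pairSetoid_rel.2 (by simp)), fun hxy u v huv => ?_⟩
  rcases pairSetoid_rel.1 huv with rfl | ⟨rfl | rfl, rfl | rfl⟩
  exacts [α.refl' _, α.refl' _, hxy, α.symm' hxy, α.refl' _]

theorem disjoint_pairSetoid_sup_pairSetoid (hxy : ¬ α x y) (hx : α x x') (hy : α y y')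
    (hx_ne : x' ≠ x) (hy_ne : y' ≠ y) : Disjoint α (pairSetoid x y ⊔ pairSetoid x' y') := by
  classical
  have hxy' : ¬ α x y' := fun h => hxy (α.trans' h (α.symm' hy))
  have hx'y : ¬ α x' y := fun h => hxy (α.trans' hx h)
  have hx'y' : ¬ α x' y' := fun h => hxy' (α.trans' hx h)
  have ne_of_not_rel {u v : S} (h : ¬ α u v) : u ≠ v := fun e => h (e ▸ α.refl' u)
  let f : S → S := Function.update (Function.update id y x) y' x'
  have sup_le_ker : pairSetoid x y ⊔ pairSetoid x' y' ≤ Setoid.ker f := by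
    refine sup_le (pairSetoid_le_iff.2 ?_) (pairSetoid_le_iff.2 ?_)
    · simp [Setoid.ker_def, f, ne_of_not_rel hxy, ne_of_not_rel hxy', hy_ne.symm]
    · simp [Setoid.ker_def, f, ne_of_not_rel hx'y, ne_of_not_rel hx'y']
  have injOn_class {u v : S} (huv : α u v) (hf : f u = f v) : u = v := by
    have hvu := α.symm' huv
    simp only [f, Function.update_apply, id] at hf
    grind
  have disjoint_ker : Disjoint α (Setoid.ker f) :=
    disjoint_iff_inf_le.2 fun _ _ huv => injOn_class huv.1 huv.2
  exact disjoint_ker.mono_right sup_le_ker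

theorem IsUpperModularElement.rel_of_square (hα : IsUpperModularElement α) (hβα : β ≤ α)
    (hγβ : α ⊓ γ ≤ β) (hx : β x x') (hy : α y y') (hxy : γ x y) (hxy' : γ x' y') : β y y' := by
  have hsup : (β ⊔ γ) y y' :=
    have hβ : β ≤ β ⊔ γ := le_sup_left
    have hγ : γ ≤ β ⊔ γ := le_sup_right
    (β ⊔ γ).trans' (hγ (γ.symm' hxy)) ((β ⊔ γ).trans' (hβ hx) (hγ hxy'))
  exact isUpperModularElement_iff_inf_sup_le.1 hα β γ hβα hγβ ⟨hy, hsup⟩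

theorem IsUpperModularElement.hasAtMostOneNonSingletonClass (hα : IsUpperModularElement α) :
    HasAtMostOneNonSingletonClass α := by
  rintro x y ⟨x', hx_ne, hx⟩ ⟨y', hy_ne, hy⟩
  by_contra hxy
  have hdisj := disjoint_pairSetoid_sup_pairSetoid hxy hx hy hx_ne hy_ne
  have hpair : pairSetoid x x' y y' :=
    hα.rel_of_square (pairSetoid_le_iff.2 hx) (hdisj.le_bot.trans bot_le)
      (pairSetoid_le_iff.1 le_rfl) hy
      (pairSetoid_le_iff.1 le_sup_left) (pairSetoid_le_iff.1 le_sup_right)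
  rcases pairSetoid_rel.1 hpair with rfl | ⟨rfl | rfl, -⟩
  exacts [hy_ne rfl, hxy (α.refl' _), hxy hx]

theorem HasAtMostOneNonSingletonClass.exists_rel_rel_of_sup_rel
    (hα : HasAtMostOneNonSingletonClass α) (hβα : β ≤ α) (hγβ : α ⊓ γ ≤ β)
    (hx : ∃ x', x' ≠ x ∧ α x x') (hxy : (β ⊔ γ) x y) : ∃ z, β x z ∧ γ z y := by
  refine setoid_sup_rel_induction (P := fun v => ∃ z, β x z ∧ γ z v) ?_ ?_ hxy
    ⟨x, β.refl' x, γ.refl' x⟩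
  · rintro u v huv ⟨z, hxz, hzu⟩
    rcases eq_or_ne v u with rfl | hvu
    · exact ⟨z, hxz, hzu⟩
    have hxu : α x u := hα x u hx ⟨v, hvu, hβα huv⟩
    have hzu' : β z u := hγβ ⟨α.trans' (α.symm' (hβα hxz)) hxu, hzu⟩
    exact ⟨v, β.trans' hxz (β.trans' hzu' huv), γ.refl' v⟩
  · rintro u v huv ⟨z, hxz, hzu⟩
    exact ⟨z, hxz, γ.trans' hzu huv⟩

theorem HasAtMostOneNonSingletonClass.isUpperModularElement
    (hα : HasAtMostOneNonSingletonClass α) : IsUpperModularElement α := by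
  rw [isUpperModularElement_iff_inf_sup_le]
  rintro β γ hβα hγβ x y ⟨hxy, hsup⟩
  rcases eq_or_ne y x with rfl | hne
  · exact β.refl' y
  obtain ⟨z, hxz, hzy⟩ := hα.exists_rel_rel_of_sup_rel hβα hγβ ⟨y, hne, hxy⟩ hsup
  have hzy' : β z y := hγβ ⟨α.trans' (α.symm' (hβα hxz)) hxy, hzy⟩
  exact β.trans' hxz hzy'

end EquivalenceRelations

/-- An equivalence relation `α` on a non-empty set `S` is an upper-modular element of the
lattice `Eq(S)` of all equivalence relations on `S` if and only if `α` has at most one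
non-singleton class. -/
theorem isUpperModularElement_setoid_iff {S : Type*} [Nonempty S] (α : Setoid S) :
    IsUpperModularElement α ↔ HasAtMostOneNonSingletonClass α :=
  ⟨fun h => h.hasAtMostOneNonSingletonClass, fun h => h.isUpperModularElement⟩
end

section
/- Let L be a lattice with a least element ⊥ and let a ∈ L be an atom of L that is also a neutral element of L. Then an element x ∈ L is an upper-modular element of L if and only if x ⊔ a is an upper-modular element of L. -/
/-- An element `x` of a lattice `L` is neutral if for all `y, z ∈ L` one has
`(x ⊔ y) ⊓ (y ⊔ z) ⊓ (z ⊔ x) = (x ⊓ y) ⊔ (y ⊓ z) ⊔ (z ⊓ x)`. -/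
def IsNeutralElement {L : Type*} [Lattice L] (x : L) : Prop :=
  ∀ y z : L, (x ⊔ y) ⊓ (y ⊔ z) ⊓ (z ⊔ x) = (x ⊓ y) ⊔ (y ⊓ z) ⊔ (z ⊓ x)

/-!
If `a` is neutral, then `y ↦ (a ⊓ y, a ⊔ y)` is an injective lattice homomorphism, so an identity
may be checked after meeting with `a` and after joining with `a`. In this way `x` is upper-modular
if and only if both components `a ⊓ x` and `a ⊔ x` are. When `a` is an atom, `a ⊓ x` is `⊥` or `a`,
which are both upper-modular, so only the condition on `a ⊔ x` remains.
-/

section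

variable {L : Type*} [Lattice L] {a x : L}

namespace IsNeutralElement

theorem dual (hn : IsNeutralElement a) : IsNeutralElement (OrderDual.toDual a) :=
  fun y z => (hn (OrderDual.ofDual y) (OrderDual.ofDual z)).symm

theorem isUpperModularElement (hn : IsNeutralElement a) : IsUpperModularElement a := by
  intro y z hy
  calc a ⊓ (y ⊔ z) = (a ⊔ y) ⊓ (y ⊔ z) ⊓ (z ⊔ a) := by
        rw [sup_eq_left.2 hy, inf_right_comm, sup_comm z a, inf_sup_self]
    _ = (a ⊓ y) ⊔ (y ⊓ z) ⊔ (z ⊓ a) := hn y z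
    _ = y ⊔ (a ⊓ z) := by rw [inf_eq_right.2 hy, sup_inf_self, inf_comm z a]

protected theorem inf_sup_left (hn : IsNeutralElement a) (y z : L) :
    a ⊓ (y ⊔ z) = (a ⊓ y) ⊔ (a ⊓ z) :=
  calc a ⊓ (y ⊔ z) = a ⊓ ((a ⊔ y) ⊓ (y ⊔ z) ⊓ (z ⊔ a)) := by
        rw [inf_right_comm, ← inf_assoc, ← inf_assoc, inf_sup_self, sup_comm z a, inf_sup_self]
    _ = a ⊓ ((a ⊓ y) ⊔ (y ⊓ z) ⊔ (z ⊓ a)) := by rw [hn y z]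
    _ = a ⊓ ((a ⊓ y) ⊔ (a ⊓ z) ⊔ (y ⊓ z)) := by rw [sup_right_comm, inf_comm z a]
    _ = (a ⊓ y) ⊔ (a ⊓ z) ⊔ (a ⊓ (y ⊓ z)) :=
        hn.isUpperModularElement _ _ (sup_le inf_le_left inf_le_left)
    _ = (a ⊓ y) ⊔ (a ⊓ z) :=
        sup_eq_left.2 ((inf_le_inf_left a inf_le_left).trans le_sup_left)

protected theorem sup_inf_left (hn : IsNeutralElement a) (y z : L) :
    a ⊔ (y ⊓ z) = (a ⊔ y) ⊓ (a ⊔ z) :=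
  hn.dual.inf_sup_left (OrderDual.toDual y) (OrderDual.toDual z)

theorem sup_sup_inf (hn : IsNeutralElement a) (y z : L) :
    a ⊔ ((a ⊔ y) ⊓ z) = a ⊔ (y ⊓ z) := by
  rw [hn.sup_inf_left, hn.sup_inf_left, sup_left_idem]

theorem eq_of_inf_eq_of_sup_eq (hn : IsNeutralElement a) {y z : L}
    (h_inf : a ⊓ y = a ⊓ z) (h_sup : a ⊔ y = a ⊔ z) : y = z := by
  have inf_le : a ⊓ y ≤ y ⊓ z := le_inf inf_le_right (h_inf ▸ inf_le_right)
  have le_sup : y ⊔ z ≤ a ⊔ y := sup_le le_sup_right (h_sup ▸ le_sup_right)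
  have median_eq := hn y z
  rw [sup_comm z a, inf_comm z a, ← h_inf, ← h_sup, inf_eq_right.2 le_sup, inf_eq_left.2 le_sup,
    sup_eq_right.2 inf_le, sup_eq_left.2 inf_le] at median_eq
  exact sup_eq_inf.1 median_eq

end IsNeutralElement

namespace IsUpperModularElement

theorem neutral_inf (h : IsUpperModularElement x) (hn : IsNeutralElement a) :
    IsUpperModularElement (a ⊓ x) := by
  intro y z hy
  obtain ⟨hya, hyx⟩ := le_inf_iff.1 hy
  rw [inf_assoc, h y z hyx, hn.inf_sup_left, inf_eq_right.2 hya, inf_assoc]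

theorem neutral_sup (h : IsUpperModularElement x) (hn : IsNeutralElement a) :
    IsUpperModularElement (a ⊔ x) := by
  intro y z hy
  have sup_inf_eq : a ⊔ (x ⊓ y) = a ⊔ y := by
    rw [hn.sup_inf_left, inf_eq_right.2 (sup_le le_sup_left hy)]
  apply hn.eq_of_inf_eq_of_sup_eq
  · rw [← inf_assoc, inf_sup_self, hn.inf_sup_left, hn.inf_sup_left, ← inf_assoc, inf_sup_self]
  · calc a ⊔ ((a ⊔ x) ⊓ (y ⊔ z)) = (a ⊔ x) ⊓ (a ⊔ y ⊔ z) := by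
          rw [hn.sup_inf_left, sup_left_idem, sup_assoc]
      _ = a ⊔ (x ⊓ ((x ⊓ y) ⊔ z)) := by rw [← sup_inf_eq, sup_assoc, hn.sup_inf_left x]
      _ = a ⊔ ((x ⊓ y) ⊔ (x ⊓ z)) := by rw [h _ z inf_le_left]
      _ = y ⊔ (a ⊔ (x ⊓ z)) := by rw [← sup_assoc, sup_inf_eq, sup_comm a y, sup_assoc]
      _ = a ⊔ (y ⊔ ((a ⊔ x) ⊓ z)) := by rw [← hn.sup_sup_inf, sup_left_comm]

theorem of_neutral_inf_of_neutral_sup (hn : IsNeutralElement a)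
    (h_inf : IsUpperModularElement (a ⊓ x)) (h_sup : IsUpperModularElement (a ⊔ x)) :
    IsUpperModularElement x := by
  intro y z hy
  apply hn.eq_of_inf_eq_of_sup_eq
  · calc a ⊓ (x ⊓ (y ⊔ z)) = (a ⊓ x) ⊓ ((a ⊓ y) ⊔ (a ⊓ z)) := by
          rw [inf_inf_distrib_left, hn.inf_sup_left]
      _ = (a ⊓ y) ⊔ ((a ⊓ x) ⊓ (a ⊓ z)) := h_inf _ _ (inf_le_inf_left a hy)
      _ = a ⊓ (y ⊔ (x ⊓ z)) := by rw [← inf_inf_distrib_left, hn.inf_sup_left]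
  · calc a ⊔ (x ⊓ (y ⊔ z)) = (a ⊔ x) ⊓ ((a ⊔ y) ⊔ z) := by rw [hn.sup_inf_left, sup_assoc]
      _ = (a ⊔ y) ⊔ ((a ⊔ x) ⊓ z) := h_sup _ _ (sup_le_sup_left hy a)
      _ = y ⊔ (a ⊔ ((a ⊔ x) ⊓ z)) := by rw [sup_comm a y, sup_assoc]
      _ = a ⊔ (y ⊔ (x ⊓ z)) := by rw [hn.sup_sup_inf, sup_left_comm]

end IsUpperModularElement

theorem isUpperModularElement_sup_atom_iff_general (hn : IsNeutralElement a) (x : L) :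
    IsUpperModularElement x ↔
      IsUpperModularElement (a ⊓ x) ∧ IsUpperModularElement (a ⊔ x) :=
  ⟨fun h => ⟨h.neutral_inf hn, h.neutral_sup hn⟩,
    fun h => .of_neutral_inf_of_neutral_sup hn h.1 h.2⟩

variable [OrderBot L]

theorem isUpperModularElement_bot : IsUpperModularElement (⊥ : L) := by
  intro y z hy
  simp [le_bot_iff.1 hy]

theorem IsNeutralElement.isUpperModularElement_of_le_atom (hn : IsNeutralElement a)
    (ha : IsAtom a) (hx : x ≤ a) : IsUpperModularElement x := by
  rcases ha.le_iff.1 hx with rfl | rfl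
  · exact isUpperModularElement_bot
  · exact hn.isUpperModularElement

end

/-- If `a` is an atom and a neutral element of a lattice `L` with least element, then
an element `x ∈ L` is a uppermodular element of `L` if and only if `x ⊔ a` is. -/
theorem isUpperModularElement_sup_atom_iff {L : Type*} [Lattice L] [OrderBot L] (a : L)
    (ha : IsAtom a) (hn : IsNeutralElement a) (x : L) :
    IsUpperModularElement x ↔ IsUpperModularElement (x ⊔ a) := by
  rw [sup_comm x a, isUpperModularElement_sup_atom_iff_general hn x]
  exact and_iff_right (hn.isUpperModularElement_of_le_atom ha inf_le_left)
end

section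
/- Let L be a lattice with a least element ⊥ and let a ∈ L be an atom of L that is also a neutral element of L. Then an element x ∈ L is a costandard element of L if and only if x ⊔ a is a costandard element of L. -/
def IsCostandardElement {L : Type*} [Lattice L] (x : L) : Prop :=
  ∀ y z : L, (x ⊓ y) ⊔ z = (x ⊔ z) ⊓ (y ⊔ z)

/-!
If `a` is neutral, then `y ↦ (y ⊓ a, y ⊔ a)` embeds `L` into `Set.Iic a × Set.Ici a` and is onto
each factor. Hence an element is costandard iff both of its components are. The elements `x` and
`x ⊔ a` have the same component in `Set.Ici a`, while their components in `Set.Iic a` are `x ⊓ a`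
and the top element. If `a` is an atom, `Set.Iic a` consists only of its bottom and top elements,
which are costandard in any lattice.
-/

open Set

section Costandard

variable {L M : Type*} [Lattice L] [Lattice M]

theorem isCostandardElement_bot [OrderBot L] : IsCostandardElement (⊥ : L) := fun _ _ => by
  simp

theorem isCostandardElement_top [OrderTop L] : IsCostandardElement (⊤ : L) := fun _ _ => by
  simp

theorem isCostandardElement_of_isSimpleOrder [BoundedOrder L] [IsSimpleOrder L] (x : L) :
    IsCostandardElement x := by
  rcases eq_bot_or_eq_top x with rfl | rfl
  · exact isCostandardElement_bot
  · exact isCostandardElement_top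

theorem IsCostandardElement.map {x : L} (hx : IsCostandardElement x) (f : LatticeHom L M)
    (hf : Function.Surjective f) : IsCostandardElement (f x) := by
  intro u v
  obtain ⟨y, rfl⟩ := hf u
  obtain ⟨z, rfl⟩ := hf v
  simp only [← map_sup, ← map_inf, hx y z]

end Costandard

namespace IsNeutralElement

variable {L : Type*} [Lattice L] {a : L}

theorem toDual (ha : IsNeutralElement a) : IsNeutralElement (OrderDual.toDual a) :=
  fun y z => (ha (OrderDual.ofDual y) (OrderDual.ofDual z)).symm

theorem sup_inf_sup_inf_sup_le (ha : IsNeutralElement a) (y z : L) :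
    (y ⊔ z) ⊓ ((y ⊔ a) ⊓ (z ⊔ a)) ≤ y ⊓ z ⊔ a :=
  calc (y ⊔ z) ⊓ ((y ⊔ a) ⊓ (z ⊔ a))
      = (a ⊔ y) ⊓ (y ⊔ z) ⊓ (z ⊔ a) := by rw [sup_comm a y, ← inf_assoc, inf_comm (y ⊔ z)]
    _ = a ⊓ y ⊔ y ⊓ z ⊔ z ⊓ a := ha y z
    _ ≤ y ⊓ z ⊔ a :=
      sup_le (sup_le (inf_le_left.trans le_sup_right) le_sup_left) (inf_le_right.trans le_sup_right)

protected theorem sup_inf_right (ha : IsNeutralElement a) (y z : L) :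
    y ⊓ z ⊔ a = (y ⊔ a) ⊓ (z ⊔ a) := by
  refine le_antisymm (sup_le (inf_le_inf le_sup_left le_sup_left)
    (le_inf le_sup_right le_sup_right)) ?_
  set m := (y ⊔ a) ⊓ (z ⊔ a)
  have m_le : m ≤ a ⊔ (y ⊔ z) :=
    inf_le_left.trans (sup_le (le_sup_left.trans le_sup_right) le_sup_left)
  calc m ≤ (a ⊔ (y ⊔ z)) ⊓ ((y ⊔ z) ⊔ m) ⊓ (m ⊔ a) :=
        le_inf (le_inf m_le le_sup_right) le_sup_left
    _ = a ⊓ (y ⊔ z) ⊔ (y ⊔ z) ⊓ m ⊔ m ⊓ a := ha (y ⊔ z) m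
    _ ≤ y ⊓ z ⊔ a :=
      sup_le (sup_le (inf_le_left.trans le_sup_right) (ha.sup_inf_sup_inf_sup_le y z))
        (inf_le_right.trans le_sup_right)

protected theorem inf_sup_right (ha : IsNeutralElement a) (y z : L) :
    (y ⊔ z) ⊓ a = y ⊓ a ⊔ z ⊓ a :=
  ha.toDual.sup_inf_right (OrderDual.toDual y) (OrderDual.toDual z)

protected theorem le_of_inf_le_sup_le (ha : IsNeutralElement a) {y z : L}
    (hinf : y ⊓ a ≤ z ⊓ a) (hsup : y ⊔ a ≤ z ⊔ a) : y ≤ z :=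
  calc y ≤ (a ⊔ y) ⊓ (y ⊔ z) ⊓ (z ⊔ a) :=
        le_inf (le_inf le_sup_right le_sup_left) (le_sup_left.trans hsup)
    _ = a ⊓ y ⊔ y ⊓ z ⊔ z ⊓ a := ha y z
    _ ≤ z := sup_le (sup_le (inf_comm a y ▸ hinf.trans inf_le_left) inf_le_right) inf_le_left

protected theorem eq_of_inf_eq_sup_eq (ha : IsNeutralElement a) {y z : L}
    (hinf : y ⊓ a = z ⊓ a) (hsup : y ⊔ a = z ⊔ a) : y = z :=
  le_antisymm (ha.le_of_inf_le_sup_le hinf.le hsup.le) (ha.le_of_inf_le_sup_le hinf.ge hsup.ge)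

/-- Meeting with a neutral element `a`, as a lattice homomorphism onto the principal ideal of `a`;
the first component of the decomposition of `L` along `a`. -/
def infHom (ha : IsNeutralElement a) : LatticeHom L (Iic a) where
  toFun y := ⟨y ⊓ a, inf_le_right⟩
  map_sup' y z := Subtype.ext (ha.inf_sup_right y z)
  map_inf' y z := Subtype.ext (inf_inf_distrib_right y z a)

/-- Joining with a neutral element `a`, as a lattice homomorphism onto the principal filter of `a`;
the second component of the decomposition of `L` along `a`. -/
def supHom (ha : IsNeutralElement a) : LatticeHom L (Ici a) where
  toFun y := ⟨y ⊔ a, le_sup_right⟩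
  map_sup' y z := Subtype.ext (sup_sup_distrib_right y z a)
  map_inf' y z := Subtype.ext (ha.sup_inf_right y z)

theorem infHom_surjective (ha : IsNeutralElement a) : Function.Surjective ha.infHom :=
  fun u => ⟨u, Subtype.ext (inf_eq_left.mpr u.2)⟩

theorem supHom_surjective (ha : IsNeutralElement a) : Function.Surjective ha.supHom :=
  fun u => ⟨u, Subtype.ext (sup_eq_left.mpr u.2)⟩

theorem infHom_sup_self (ha : IsNeutralElement a) (x : L) : ha.infHom (x ⊔ a) = ⊤ :=
  Subtype.ext (inf_eq_right.mpr le_sup_right)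

theorem supHom_sup_self (ha : IsNeutralElement a) (x : L) :
    ha.supHom (x ⊔ a) = ha.supHom x :=
  Subtype.ext (sup_right_idem x a)

theorem eq_of_infHom_eq_supHom_eq (ha : IsNeutralElement a) {y z : L}
    (hinf : ha.infHom y = ha.infHom z) (hsup : ha.supHom y = ha.supHom z) : y = z :=
  ha.eq_of_inf_eq_sup_eq (congrArg Subtype.val hinf) (congrArg Subtype.val hsup)

theorem isCostandardElement_iff (ha : IsNeutralElement a) {x : L} :
    IsCostandardElement x ↔
      IsCostandardElement (ha.infHom x) ∧ IsCostandardElement (ha.supHom x) := by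
  refine ⟨fun hx => ⟨hx.map _ ha.infHom_surjective, hx.map _ ha.supHom_surjective⟩, ?_⟩
  rintro ⟨hinf, hsup⟩ y z
  apply ha.eq_of_infHom_eq_supHom_eq
  · simpa only [map_sup, map_inf] using hinf (ha.infHom y) (ha.infHom z)
  · simpa only [map_sup, map_inf] using hsup (ha.supHom y) (ha.supHom z)

theorem isCostandardElement_sup_self_iff (ha : IsNeutralElement a) {x : L} :
    IsCostandardElement (x ⊔ a) ↔ IsCostandardElement (ha.supHom x) := by
  rw [ha.isCostandardElement_iff, ha.infHom_sup_self, ha.supHom_sup_self,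
    and_iff_right isCostandardElement_top]

end IsNeutralElement

theorem isCostandardElement_sup_atom_iff_general {L : Type*} [Lattice L] {a : L}
    (hn : IsNeutralElement a) {x : L} (hx : IsCostandardElement (hn.infHom x)) :
    IsCostandardElement x ↔ IsCostandardElement (x ⊔ a) := by
  rw [hn.isCostandardElement_iff, hn.isCostandardElement_sup_self_iff, and_iff_right hx]

/-- If `a` is an atom and a neutral element of a lattice `L` with least element, then
an element `x ∈ L` is a costandard element of `L` if and only if `x ⊔ a` is. -/
theorem isCostandardElement_sup_atom_iff {L : Type*} [Lattice L] [OrderBot L] (a : L)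
    (ha : IsAtom a) (hn : IsNeutralElement a) (x : L) :
    IsCostandardElement x ↔ IsCostandardElement (x ⊔ a) := by
  have : IsSimpleOrder (Iic a) := isSimpleOrder_Iic_iff_isAtom.mpr ha
  exact isCostandardElement_sup_atom_iff_general hn (isCostandardElement_of_isSimpleOrder _)
end

section
/- Let G be a group acting on a set A such that the action is not transitive and the stabilizers of any two points of A coincide (for all x, y ∈ A, Stab(x) = Stab(y)). Then a congruence α on the G-set A is a standard element of the congruence lattice Con(A) if and only if α is the equality relation or the universal relation on A. -/
def IsStandardElement {L : Type*} [Lattice L] (x : L) : Prop :=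
  ∀ y z : L, (x ⊔ y) ⊓ z = (x ⊓ z) ⊔ (y ⊓ z)

/-- The congruence lattice `Con(A)` of a `G`-set `A`: the sublattice of the lattice
`Setoid A` of all equivalence relations on `A` (where meet is intersection and join is
the transitive closure of the union) consisting of the equivalence relations compatible
with the action of `G`. -/
def gSetCongruences (G A : Type*) [Group G] [MulAction G A] : Sublattice (Setoid A) where
  carrier := {r : Setoid A | ∀ (g : G) (x y : A), r x y → r (g • x) (g • y)}
  supClosed' := by
    intro r hr s hs g x y hxy
    rw [Setoid.sup_eq_eqvGen] at hxy ⊢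
    induction hxy with
    | rel a b h => exact Relation.EqvGen.rel _ _ (h.imp (hr g a b) (hs g a b))
    | refl a => exact Relation.EqvGen.refl _
    | symm a b _ ih => exact Relation.EqvGen.symm _ _ ih
    | trans a b c _ _ ih1 ih2 => exact Relation.EqvGen.trans _ _ _ ih1 ih2
  infClosed' := by
    intro r hr s hs g x y hxy
    exact ⟨hr g x y hxy.1, hs g x y hxy.2⟩

/-!
Suppose `α` is standard. If `β ⊓ γ = ⊥`, `α p q`, `β q r` and `γ p r`, then `(p, r)` lies in
`(α ⊔ β) ⊓ γ = α ⊓ γ`, so `α p r`. Take `p ≠ q` with `α p q`, and `r` outside the orbit of `q`.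
Since the stabilizers of `q` and `r` agree, `g • q ↔ g • r` is a well-defined matching of their
orbits, and its pairs are the nontrivial blocks of a congruence `β`. For `γ` take the similar
matching of the orbits of `p` and `r` when they differ, and the orbit relation otherwise. Hence `α`
relates `p` to every point outside the orbit of `q`, and `q` to every point outside the orbit of
`p`. If `p` and `q` lie in different orbits, every point is of one of these two kinds, so `α = ⊤`;
otherwise first replace `q` by a point of another orbit.
-/

open MulAction

namespace IsStandardElement

variable {L : Type*} [Lattice L] {x y z : L}

theorem of_isBot (hx : IsBot x) : IsStandardElement x := fun y z => by
  rw [sup_eq_right.2 (hx y), inf_eq_left.2 (hx z), sup_eq_right.2 (hx (y ⊓ z))]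

theorem of_isTop (hx : IsTop x) : IsStandardElement x := fun y z => by
  rw [sup_eq_left.2 (hx y), inf_eq_right.2 (hx z), sup_eq_left.2 inf_le_right]

theorem sup_inf_le (hx : IsStandardElement x) (hyz : y ⊓ z ≤ x) : (x ⊔ y) ⊓ z ≤ x :=
  (hx y z).trans_le (sup_le inf_le_left hyz)

end IsStandardElement

section Action

variable {G A : Type*} [Group G] [MulAction G A] {a b : A}

theorem smul_eq_smul_of_stabilizer_le (hstab : stabilizer G a ≤ stabilizer G b) {g h : G}
    (hgh : g • a = h • a) : g • b = h • b := by
  have hmem : h⁻¹ * g ∈ stabilizer G a := by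
    rw [mem_stabilizer_iff, mul_smul, hgh, inv_smul_smul]
  rw [← inv_smul_eq_iff, ← mul_smul]
  exact hstab hmem

theorem smul_ne_smul_of_notMem_orbit (hab : b ∉ orbit G a) (g h : G) : g • a ≠ h • b := by
  intro hgh
  have hb : b ∈ orbit G (g • a) := hgh ▸ mem_orbit_smul h b
  exact hab (orbit_smul g a ▸ hb)

theorem exists_notMem_orbit_of_not_isPretransitive (h : ¬ IsPretransitive G A) (a : A) :
    ∃ b, b ∉ orbit G a := by
  rwa [isPretransitive_iff_orbit_eq_univ a, Set.eq_univ_iff_forall, not_forall] at h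

end Action

section Congruences

variable {G A : Type*} [Group G] [MulAction G A]

variable (G A) in
/-- The congruence whose blocks are the orbits of the action. -/
def orbitCongruence : gSetCongruences G A :=
  ⟨orbitRel G A, fun g x y hxy => by
    rw [orbitRel_apply, orbit_smul]
    exact mem_orbit_of_mem_orbit g hxy⟩

/-- The congruence generated by `(a, b)`, for points `a` and `b` in different orbits with the same
stabilizer: it identifies `g • a` with `g • b` for every `g`, and nothing else. Unordered pairs make
the symmetry of the relation built in. -/
def orbitMatching {a b : A} (hstab : stabilizer G a = stabilizer G b) (hab : b ∉ orbit G a) :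
    gSetCongruences G A where
  val :=
    { r := fun x y => x = y ∨ ∃ g : G, s(g • a, g • b) = s(x, y)
      iseqv :=
        { refl := fun _ => Or.inl rfl
          symm := fun hxy => hxy.imp Eq.symm fun ⟨g, hg⟩ => ⟨g, hg.trans Sym2.eq_swap⟩
          trans := by
            rintro x y z (rfl | ⟨g, hg⟩) (rfl | ⟨h, hh⟩)
            · exact Or.inl rfl
            · exact Or.inr ⟨h, hh⟩
            · exact Or.inr ⟨g, hg⟩
            · left
              rw [Sym2.eq_iff] at hg hh
              obtain ⟨rfl, rfl⟩ | ⟨rfl, rfl⟩ := hg <;> obtain ⟨hy, rfl⟩ | ⟨rfl, hy⟩ := hh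
              · exact absurd hy (smul_ne_smul_of_notMem_orbit hab h g)
              · exact smul_eq_smul_of_stabilizer_le hstab.ge hy.symm
              · exact smul_eq_smul_of_stabilizer_le hstab.le hy.symm
              · exact absurd hy.symm (smul_ne_smul_of_notMem_orbit hab g h) } }
  property := by
    rintro g x y (rfl | ⟨h, hh⟩)
    · exact Or.inl rfl
    · refine Or.inr ⟨g * h, ?_⟩
      simpa only [Sym2.map_mk, smul_smul] using congrArg (Sym2.map (g • ·)) hh

variable {p q r : A}

theorem orbitMatching_rel (hstab : stabilizer G p = stabilizer G q) (hpq : q ∉ orbit G p) :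
    (orbitMatching hstab hpq : Setoid A) p q :=
  Or.inr ⟨1, by simp only [one_smul]⟩

theorem disjoint_orbitMatching_orbitMatching (hqr : stabilizer G q = stabilizer G r)
    (hpr : stabilizer G p = stabilizer G r) (hrq : r ∉ orbit G q) (hrp : r ∉ orbit G p)
    (hpq : p ≠ q) :
    Disjoint (orbitMatching hqr hrq : Setoid A) (orbitMatching hpr hrp) := by
  rw [disjoint_iff_inf_le]
  rintro x y ⟨hxy | ⟨g, hg⟩, hxy' | ⟨h, hh⟩⟩
  · exact hxy
  · exact hxy
  · exact hxy'
  obtain ⟨hgq, hgr⟩ | ⟨hgq, -⟩ := Sym2.eq_iff.1 (hg.trans hh.symm)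
  · have hq : h • q = h • p := (smul_eq_smul_of_stabilizer_le hqr.ge hgr).symm.trans hgq
    exact absurd (MulAction.injective h hq).symm hpq
  · exact absurd hgq (smul_ne_smul_of_notMem_orbit hrq g h)

theorem disjoint_orbitMatching_orbitCongruence (hstab : stabilizer G q = stabilizer G r)
    (hrq : r ∉ orbit G q) :
    Disjoint (orbitMatching hstab hrq : Setoid A) (orbitCongruence G A) := by
  rw [disjoint_iff_inf_le]
  rintro x y ⟨hxy | ⟨g, hg⟩, k, hk⟩
  · exact hxy
  · obtain ⟨rfl, rfl⟩ | ⟨rfl, rfl⟩ := Sym2.eq_iff.1 hg <;> simp only [smul_smul] at hk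
    · exact absurd hk.symm (smul_ne_smul_of_notMem_orbit hrq _ _)
    · exact absurd hk (smul_ne_smul_of_notMem_orbit hrq _ _)

variable {α β γ : gSetCongruences G A}

theorem IsStandardElement.rel_of_disjoint (hα : IsStandardElement α)
    (hβγ : Disjoint (β : Setoid A) γ) (hpq : (α : Setoid A) p q) (hqr : (β : Setoid A) q r)
    (hpr : (γ : Setoid A) p r) : (α : Setoid A) p r := by
  have hle : β ⊓ γ ≤ α := hβγ.le_bot.trans bot_le
  have hsup : ((α : Setoid A) ⊔ β) p r :=
    Setoid.trans' _ ((le_sup_left : (α : Setoid A) ≤ α ⊔ β) hpq)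
      ((le_sup_right : (β : Setoid A) ≤ α ⊔ β) hqr)
  exact hα.sup_inf_le hle ⟨hsup, hpr⟩

theorem IsStandardElement.rel_of_notMem_orbit
    (hstab : ∀ x y : A, stabilizer G x = stabilizer G y) (hα : IsStandardElement α)
    (hpq : (α : Setoid A) p q) (hne : p ≠ q) (hrq : r ∉ orbit G q) : (α : Setoid A) p r := by
  have hqr := orbitMatching_rel (hstab q r) hrq
  by_cases hrp : r ∈ orbit G p
  · exact hα.rel_of_disjoint (disjoint_orbitMatching_orbitCongruence _ _) hpq hqr
      (mem_orbit_symm.1 hrp : p ∈ orbit G r)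
  · exact hα.rel_of_disjoint
      (disjoint_orbitMatching_orbitMatching (hstab q r) (hstab p r) hrq hrp hne) hpq hqr
      (orbitMatching_rel (hstab p r) hrp)

theorem IsStandardElement.eq_top_of_rel_of_notMem_orbit
    (hstab : ∀ x y : A, stabilizer G x = stabilizer G y) (hα : IsStandardElement α)
    (hpq : (α : Setoid A) p q) (hqp : q ∉ orbit G p) : (α : Setoid A) = ⊤ := by
  have hne : p ≠ q := fun h => hqp (h ▸ mem_orbit_self p)
  have hp (r : A) : (α : Setoid A) p r := by
    by_cases hrq : r ∈ orbit G q
    · have hrp : r ∉ orbit G p := fun hrp =>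
        hqp (orbit_eq_iff.1 ((orbit_eq_iff.2 hrq).symm.trans (orbit_eq_iff.2 hrp)))
      exact Setoid.trans' _ hpq
        (hα.rel_of_notMem_orbit hstab (Setoid.symm' _ hpq) hne.symm hrp)
    · exact hα.rel_of_notMem_orbit hstab hpq hne hrq
  exact Setoid.eq_top_iff.2 fun x y => Setoid.trans' _ (Setoid.symm' _ (hp x)) (hp y)

theorem IsStandardElement.eq_top_of_rel_of_ne (hnt : ¬ IsPretransitive G A)
    (hstab : ∀ x y : A, stabilizer G x = stabilizer G y) (hα : IsStandardElement α)
    (hpq : (α : Setoid A) p q) (hne : p ≠ q) : (α : Setoid A) = ⊤ := by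
  by_cases hqp : q ∈ orbit G p
  · obtain ⟨r, hrp⟩ := exists_notMem_orbit_of_not_isPretransitive hnt p
    have hrq : r ∉ orbit G q := orbit_eq_iff.2 hqp ▸ hrp
    exact hα.eq_top_of_rel_of_notMem_orbit hstab
      (hα.rel_of_notMem_orbit hstab hpq hne hrq) hrp
  · exact hα.eq_top_of_rel_of_notMem_orbit hstab hpq hqp

end Congruences

/-- Let `G` be a group acting non-transitively on a set `A` such that the stabilizers of
any two points of `A` coincide. A congruence `α` on the `G`-set `A` is a standard
element of the congruence lattice `Con(A)` if and only if `α` is the equality relation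
(`⊥`) or the universal relation (`⊤`) on `A`. -/
theorem gSetCongruence_isStandardElement_iff (G A : Type*) [Group G] [MulAction G A]
    (hnt : ¬ ∀ a b : A, ∃ g : G, g • a = b)
    (hstab : ∀ x y : A, MulAction.stabilizer G x = MulAction.stabilizer G y)
    (α : gSetCongruences G A) :
    IsStandardElement α ↔ ((α : Setoid A) = ⊥ ∨ (α : Setoid A) = ⊤) := by
  constructor
  · intro hα
    refine or_iff_not_imp_right.2 fun htop => eq_bot_iff.2 fun {p q} hpq => ?_
    by_contra hne
    exact htop (hα.eq_top_of_rel_of_ne (fun h => hnt h.exists_smul_eq) hstab hpq hne)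
  · rintro (hbot | htop)
    · exact .of_isBot fun β => hbot.trans_le (bot_le : ⊥ ≤ (β : Setoid A))
    · exact .of_isTop fun β => (le_top : (β : Setoid A) ≤ ⊤).trans_eq htop.symm
end
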